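/- For all integers p1, p2 and every positive integer u, one has H(u;p2,p1+1) = q^{2u} ( H(u;p1,p2) + H(u−1;p1,p2) ). -/

import Mathlib

open Finset

noncomputable section

/-- The field `ℚ(q)` of rational functions over `ℚ`. -/
abbrev F : Type := RatFunc ℚ

/-- The indeterminate `q`. -/
noncomputable def qq : F := RatFunc.X

/-- The quantum integer `[n]` with base `v`: `(v^n - v^(-n))/(v - v⁻¹)`. -/
noncomputable def qint (v : F) (n : ℤ) : F := (v ^ n - v ^ (-n)) / (v - v⁻¹)

/-- The quantum factorial `[m]! = [1][2]⋯[m]` with base `v`. -/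
noncomputable def qfact (v : F) (m : ℕ) : F := ∏ k ∈ range m, qint v ((k : ℤ) + 1)

/-- The quantum binomial coefficient `C_v(n,d) = [n][n-1]⋯[n-d+1]/[d]!` for `d ≥ 0`,
and `0` for `d < 0`. -/
noncomputable def qbinom (v : F) (n d : ℤ) : F :=
  if d < 0 then 0
  else (∏ k ∈ range d.toNat, qint v (n - (k : ℤ))) / qfact v d.toNat

/-- The function `H(u;p1,p2)` of [CLW, (5.9)]. -/
noncomputable def H (u : ℕ) (p1 p2 : ℤ) : F :=
  ∑ c ∈ range (u + 1),
    (let e : ℕ := u - c;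
     qq ^ (2 * (c : ℤ) + 2 * (c : ℤ) * p1 + 2 * (e : ℤ) * p2)
       * qbinom (qq ^ 2) p1 (c : ℤ) * qbinom (qq ^ 2) p2 (e : ℤ))

/-!
Put `v = q²` and `Φ_p(z) = ∑ₑ v^(e p) C_v(p,e) zᵉ`. The definition of `H` says that
`∑ᵤ H(u;p1,p2) zᵘ = Φ_{p1}(v z) Φ_{p2}(z)`, and the `q`-Pascal rule says that
`Φ_{p+1}(z) = (1 + v z) Φ_p(v² z)`. Hence
`Φ_{p2}(v z) Φ_{p1+1}(z) = (1 + v z) Φ_{p1}(v² z) Φ_{p2}(v z)`, which is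
`(1 + z) Φ_{p1}(v z) Φ_{p2}(z)` with `z` replaced by `v z`; compare coefficients of `zᵘ`.
-/

theorem zpow_sub_zpow_neg_ne_zero {K : Type*} [DivisionRing K] {v : K} (hv : v ≠ 0)
    (hfin : ¬IsOfFinOrder v) {n : ℤ} (hn : n ≠ 0) : v ^ n - v ^ (-n) ≠ 0 := by
  intro h
  have pow_eq_one : v ^ (n + n) = 1 := by
    rw [zpow_add₀ hv]
    nth_rewrite 1 [sub_eq_zero.mp h]
    rw [← zpow_add₀ hv, neg_add_cancel, zpow_zero]
  exact hfin (isOfFinOrder_iff_zpow_eq_one.mpr ⟨n + n, by omega, pow_eq_one⟩)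

section QuantumNumbers

variable {v : F}

theorem qint_add (hv : v ≠ 0) (a b : ℤ) :
    qint v (a + b) = v ^ b * qint v a + v ^ (-a) * qint v b := by
  have numerators : v ^ (a + b) - v ^ (-(a + b)) =
      v ^ b * (v ^ a - v ^ (-a)) + v ^ (-a) * (v ^ b - v ^ (-b)) := by
    rw [neg_add, zpow_add₀ hv, zpow_add₀ hv]
    ring
  rw [qint, qint, qint, numerators, add_div, mul_div_assoc, mul_div_assoc]

theorem qint_ne_zero (hv : v ≠ 0) (hfin : ¬IsOfFinOrder v) {n : ℤ} (hn : n ≠ 0) :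
    qint v n ≠ 0 := by
  refine div_ne_zero (zpow_sub_zpow_neg_ne_zero hv hfin hn) ?_
  simpa only [zpow_one, zpow_neg] using zpow_sub_zpow_neg_ne_zero hv hfin one_ne_zero

variable (v)

theorem qfact_succ (d : ℕ) : qfact v (d + 1) = qfact v d * qint v (d + 1) :=
  prod_range_succ _ _

theorem qbinom_natCast (n : ℤ) (d : ℕ) :
    qbinom v n d = (∏ k ∈ range d, qint v (n - k)) / qfact v d := by
  rw [qbinom, if_neg (by omega), Int.toNat_natCast]

theorem qbinom_zero_right (n : ℤ) : qbinom v n 0 = 1 := by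
  simp [qbinom, qfact]

theorem qbinom_succ_right (n : ℤ) (d : ℕ) :
    qbinom v n (d + 1 : ℕ) = qbinom v n d * (qint v (n - d) / qint v (d + 1)) := by
  rw [qbinom_natCast, qbinom_natCast, prod_range_succ, qfact_succ, mul_div_mul_comm]

theorem qbinom_add_one_succ (n : ℤ) (d : ℕ) :
    qbinom v (n + 1) (d + 1 : ℕ) = qbinom v n d * (qint v (n + 1) / qint v (d + 1)) := by
  rw [qbinom_natCast, qbinom_natCast, prod_range_succ', qfact_succ, mul_div_mul_comm]
  simp only [Nat.cast_add, Nat.cast_one, Nat.cast_zero, add_sub_add_right_eq_sub, sub_zero]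

variable {v}

theorem qbinom_pascal {d : ℕ} (hd : qint v (d + 1) ≠ 0) (n : ℤ) :
    qbinom v (n + 1) (d + 1 : ℕ) =
      v ^ (d + 1 : ℤ) * qbinom v n (d + 1 : ℕ) + v ^ (d - n : ℤ) * qbinom v n d := by
  have hv : v ≠ 0 := by
    rintro rfl
    simp [qint] at hd
  have split_qint : qint v (n + 1) =
      v ^ (d + 1 : ℤ) * qint v (n - d) + v ^ (d - n : ℤ) * qint v (d + 1) := by
    have sum_eq : n - d + (d + 1 : ℤ) = n + 1 := by ring
    simpa only [sum_eq, neg_sub] using qint_add hv (n - d) (d + 1)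
  rw [qbinom_add_one_succ, qbinom_succ_right, split_qint]
  field_simp

end QuantumNumbers

section GeneratingFunctions

open PowerSeries

/-- The generating function `∑ₑ v^(e p) C_v(p,e) Xᵉ` of the quantum binomial coefficients with
upper entry `p`, the weight `v^(e p)` being the one that occurs in `H`. -/
noncomputable def qbinomSeries (v : F) (p : ℤ) : F⟦X⟧ :=
  PowerSeries.mk fun e ↦ v ^ (e * p) * qbinom v p e

theorem qbinomSeries_add_one {v : F} (hv : v ≠ 0) (hfin : ¬IsOfFinOrder v) (p : ℤ) :
    qbinomSeries v (p + 1) = rescale v ((1 + X) * rescale v (qbinomSeries v p)) := by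
  ext (_ | d)
  · simp only [qbinomSeries, coeff_rescale, coeff_mk, add_mul, one_mul, map_add, coeff_zero_X_mul,
      Nat.cast_zero, zero_mul, pow_zero, zpow_zero, qbinom_zero_right, add_zero]
  · have hd : qint v (d + 1) ≠ 0 := qint_ne_zero hv hfin (by omega)
    have upper_weight : v ^ ((d + 1 : ℕ) * (p + 1)) * v ^ (d + 1 : ℤ) =
        v ^ (d + 1) * (v ^ (d + 1) * v ^ ((d + 1 : ℕ) * p)) := by
      simp only [← zpow_natCast, ← zpow_add₀ hv]
      congr 1
      push_cast
      ring
    have lower_weight : v ^ ((d + 1 : ℕ) * (p + 1)) * v ^ (d - p : ℤ) =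
        v ^ (d + 1) * (v ^ d * v ^ (d * p)) := by
      simp only [← zpow_natCast, ← zpow_add₀ hv]
      congr 1
      push_cast
      ring
    simp only [qbinomSeries, coeff_rescale, coeff_mk, add_mul, one_mul, map_add, coeff_succ_X_mul,
      qbinom_pascal hd]
    linear_combination qbinom v p (d + 1 : ℕ) * upper_weight + qbinom v p d * lower_weight

theorem qq_ne_zero : qq ≠ 0 := RatFunc.X_ne_zero

theorem not_isOfFinOrder_qq : ¬IsOfFinOrder qq := by
  intro h
  obtain ⟨n, hn, pow_eq_one⟩ := isOfFinOrder_iff_pow_eq_one.mp h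
  have X_pow_eq_one : (Polynomial.X : Polynomial ℚ) ^ n = 1 := by
    apply RatFunc.algebraMap_injective ℚ
    rw [map_pow, RatFunc.algebraMap_X, map_one]
    exact pow_eq_one
  refine Polynomial.X_pow_sub_C_ne_zero (R := ℚ) hn 1 ?_
  rw [X_pow_eq_one, map_one, sub_self]

theorem mk_H (p1 p2 : ℤ) :
    PowerSeries.mk (H · p1 p2) =
      rescale (qq ^ 2) (qbinomSeries (qq ^ 2) p1) * qbinomSeries (qq ^ 2) p2 := by
  ext u
  rw [coeff_mk, coeff_mul, Nat.sum_antidiagonal_eq_sum_range_succ_mk, H]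
  refine sum_congr rfl fun c _ ↦ ?_
  have weight (e : ℕ) : qq ^ (2 * (c : ℤ) + 2 * c * p1 + 2 * e * p2) =
      (qq ^ 2) ^ c * (qq ^ 2) ^ (c * p1) * (qq ^ 2) ^ (e * p2) := by
    simp only [← zpow_natCast, ← zpow_mul, ← zpow_add₀ qq_ne_zero]
    congr 1
    push_cast
    ring
  simp only [weight, qbinomSeries, coeff_rescale, coeff_mk]
  ring

theorem mk_H_swap_add_one (p1 p2 : ℤ) :
    PowerSeries.mk (H · p2 (p1 + 1)) =
      rescale (qq ^ 2) ((1 + X) * PowerSeries.mk (H · p1 p2)) := by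
  have hv : qq ^ 2 ≠ 0 := pow_ne_zero 2 qq_ne_zero
  have hfin : ¬IsOfFinOrder (qq ^ 2) := by
    simpa only [isOfFinOrder_pow, two_ne_zero, or_false] using not_isOfFinOrder_qq
  simp only [mk_H, qbinomSeries_add_one hv hfin, map_mul]
  ring

end GeneratingFunctions

/-- `H(u;p2,p1+1) = q^{2u} (H(u;p1,p2) + H(u−1;p1,p2))` for `u > 0`. -/
theorem H_rec1 (p1 p2 : ℤ) (u : ℕ) (hu : 0 < u) :
    H u p2 (p1 + 1) = qq ^ (2 * (u : ℤ)) * (H u p1 p2 + H (u - 1) p1 p2) := by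
  obtain ⟨m, rfl⟩ := Nat.exists_eq_add_of_lt hu
  have coeff_eq := congrArg (PowerSeries.coeff (m + 1)) (mk_H_swap_add_one p1 p2)
  simpa only [zero_add, Nat.add_sub_cancel, PowerSeries.coeff_mk, PowerSeries.coeff_rescale,
    PowerSeries.coeff_succ_X_mul, add_mul, one_mul, map_add, mul_add, zpow_mul, zpow_natCast,
    zpow_ofNat] using coeff_eq

end
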